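/- The function f defined by f(x₁,x₂,a) = 1/(x₁ (log x₁)^{3/2}) on {x₁ > 3, |x₂| < 1, e⁻¹ < a < e}, f = c₀ on R₀ = [−1,1]×[−1,1]×[e⁻¹,e], and f = 0 elsewhere (with c₀ chosen so that ∫_G f dρ = 0) belongs to L¹(ρ) but does not belong to the Hardy space H¹. -/

import Mathlib

open MeasureTheory Real Filter Set
open scoped ENNReal

noncomputable section

/-- The group `G = ℝ² ⋊ ℝ⁺`, realized as triples `(x₁, x₂, a)` (only `a > 0` is relevant). -/
abbrev G : Type := ℝ × ℝ × ℝ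

/-- Group product `(x₁,x₂,a)·(x₁',x₂',a') = (x₁+a x₁', x₂+a x₂', a a')`. -/
def gMul (x y : G) : G := (x.1 + x.2.2 * y.1, x.2.1 + x.2.2 * y.2.1, x.2.2 * y.2.2)

/-- Group inverse `(x₁,x₂,a)⁻¹ = (−x₁/a, −x₂/a, 1/a)`. -/
def gInv (x : G) : G := (-x.1 / x.2.2, -x.2.1 / x.2.2, 1 / x.2.2)

/-- The identity `e = (0,0,1)`. -/
def gE : G := (0, 0, 1)

/-- The right Haar measure `dρ = a⁻¹ dx₁ dx₂ da` (supported where `a > 0`). -/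
def ρG : Measure G :=
  (volume : Measure G).withDensity fun x => ENNReal.ofReal (if 0 < x.2.2 then x.2.2⁻¹ else 0)

/-- The modular function `δ(x₁,x₂,a) = a⁻²`. -/
def deltaG (x : G) : ℝ := (x.2.2 ^ 2)⁻¹

/-- `|x| = √(x₁² + x₂²)`. -/
def normG (x : G) : ℝ := Real.sqrt (x.1 ^ 2 + x.2.1 ^ 2)

/-- `cosh r(x) = (a + a⁻¹ + a⁻¹|x|²)/2`. -/
def coshArg (x : G) : ℝ := (x.2.2 + x.2.2⁻¹ + x.2.2⁻¹ * (x.1 ^ 2 + x.2.1 ^ 2)) / 2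

/-- `r(x) ≥ 0` is determined by `cosh r(x) = coshArg x`; explicitly `r = arcosh (coshArg x)`. -/
def rG (x : G) : ℝ := Real.log (coshArg x + Real.sqrt (coshArg x ^ 2 - 1))

/-- The left-invariant distance `d(x,y) = r(x⁻¹y)`. -/
def dG (x y : G) : ℝ := rG (gMul (gInv x) y)

/-- The heat kernel
`p_t(x) = (8π^{3/2})⁻¹ δ(x)^{1/2} (r(x)/sinh r(x)) t^{−3/2} exp(−r(x)²/(4t))`,
with `r/sinh r := 1` at `x = e`. -/
def heatK (t : ℝ) (x : G) : ℝ :=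
  (8 * Real.pi ^ ((3 : ℝ)/2))⁻¹ * Real.sqrt (deltaG x) *
    (if rG x = 0 then 1 else rG x / Real.sinh (rG x)) *
    t ^ (-(3 : ℝ)/2) * Real.exp (-(rG x ^ 2) / (4 * t))

/-- Convolution `f ∗ p_t(x) = ∫ f(xy⁻¹) p_t(y) dρ(y)`. -/
def convHeat (f : G → ℝ) (t : ℝ) (x : G) : ℝ := ∫ y, f (gMul x (gInv y)) * heatK t y ∂ρG

/-- The heat maximal operator `Mf(x) = sup_{t>0} |f ∗ p_t(x)|` (valued in `ℝ≥0∞`). -/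
def maxHeat (f : G → ℝ) (x : G) : ℝ≥0∞ :=
  ⨆ (t : ℝ) (_ : 0 < t), ENNReal.ofReal |convHeat f t x|

/-- Calderón–Zygmund sets. -/
def IsCZ (R : Set G) : Prop :=
  ∃ c : G, ∃ L r : ℝ, 0 < c.2.2 ∧ 0 < L ∧ 0 < r ∧
    R = Set.Icc (c.1 - L/2) (c.1 + L/2) ×ˢ
        (Set.Icc (c.2.1 - L/2) (c.2.1 + L/2) ×ˢ
         Set.Icc (c.2.2 * Real.exp (-r)) (c.2.2 * Real.exp r)) ∧
    (r < 1 → Real.exp 2 * c.2.2 * r ≤ L ∧ L < Real.exp 8 * c.2.2 * r) ∧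
    (1 ≤ r → c.2.2 * Real.exp (2*r) ≤ L ∧ L < c.2.2 * Real.exp (8*r))

/-- Atoms: `A ∈ L¹(ρ)` supported in a Calderón–Zygmund set `R`, with
`‖A‖_∞ ≤ ρ(R)⁻¹` and `∫ A dρ = 0`. -/
def IsAtomG (A : G → ℝ) : Prop :=
  Integrable A ρG ∧
  ∃ R : Set G, IsCZ R ∧ (∀ x ∉ R, A x = 0) ∧
    eLpNorm A ⊤ ρG ≤ (ρG R)⁻¹ ∧
    ∫ x, A x ∂ρG = 0

/-- `f = Σ_j lam_j A_j` with atoms `A_j`, `Σ_j |lam_j| < ∞`, converging in `L¹(ρ)`. -/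
def IsH1Decomp (f : G → ℝ) (lam : ℕ → ℝ) (A : ℕ → G → ℝ) : Prop :=
  (∀ j, IsAtomG (A j)) ∧ Summable (fun j => |lam j|) ∧
  Tendsto (fun N => eLpNorm (fun x => f x - ∑ j ∈ Finset.range N, lam j * A j x) 1 ρG)
    atTop (nhds 0)

/-- The Hardy space `H¹`. -/
def MemH1 (f : G → ℝ) : Prop :=
  Integrable f ρG ∧ ∃ lam A, IsH1Decomp f lam A

/-- `‖f‖_{H¹} = inf Σ_j |lam_j|` over all atomic decompositions. -/
def H1norm (f : G → ℝ) : ℝ :=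
  sInf {s | ∃ lam A, IsH1Decomp f lam A ∧ s = ∑' j, |lam j|}

/-- The left-invariant vector field `X₀ = a ∂_a`. -/
def X0 (f : G → ℝ) (x : G) : ℝ := x.2.2 * deriv (fun s => f (x.1, x.2.1, s)) x.2.2

/-- The left-invariant vector field `X₁ = a ∂_{x₁}`. -/
def X1 (f : G → ℝ) (x : G) : ℝ := x.2.2 * deriv (fun s => f (s, x.2.1, x.2.2)) x.1

/-- The left-invariant vector field `X₂ = a ∂_{x₂}`. -/
def X2 (f : G → ℝ) (x : G) : ℝ := x.2.2 * deriv (fun s => f (x.1, s, x.2.2)) x.2.1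

/-- `‖∇p_t(x)‖`, the Euclidean norm of `(X₀p_t, X₁p_t, X₂p_t)` at `x`. -/
def gradHeatNorm (t : ℝ) (x : G) : ℝ :=
  Real.sqrt (X0 (heatK t) x ^ 2 + X1 (heatK t) x ^ 2 + X2 (heatK t) x ^ 2)

/-- The Poisson kernel `q_t(x) = π⁻² δ(x)^{1/2} (r(x)/sinh r(x)) · t/(t²+r(x)²)²`. -/
def poissonK (t : ℝ) (x : G) : ℝ :=
  (Real.pi ^ 2)⁻¹ * Real.sqrt (deltaG x) *
    (if rG x = 0 then 1 else rG x / Real.sinh (rG x)) *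
    (t / (t ^ 2 + rG x ^ 2) ^ 2)

/-- Convolution `f ∗ q_t(x) = ∫ f(xy⁻¹) q_t(y) dρ(y)`. -/
def convPoisson (f : G → ℝ) (t : ℝ) (x : G) : ℝ := ∫ y, f (gMul x (gInv y)) * poissonK t y ∂ρG

/-- The Poisson maximal operator `M̃f(x) = sup_{t>0} |f ∗ q_t(x)|`. -/
def maxPoisson (f : G → ℝ) (x : G) : ℝ≥0∞ :=
  ⨆ (t : ℝ) (_ : 0 < t), ENNReal.ofReal |convPoisson f t x|

/-- `G_{r₁}(x) = sup_{z ∈ B(x,r₁/2)} sup_{t>0} ‖∇p_t(z)‖`. -/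
def Gsup (r1 : ℝ) (x : G) : ℝ≥0∞ :=
  ⨆ (z : G) (_ : 0 < z.2.2 ∧ dG x z < r1 / 2) (t : ℝ) (_ : 0 < t),
    ENNReal.ofReal (gradHeatNorm t z)

/-- `R₀ = [−1,1]×[−1,1]×[e⁻¹,e]`. -/
def R0set : Set G :=
  Set.Icc (-1 : ℝ) 1 ×ˢ (Set.Icc (-1 : ℝ) 1 ×ˢ Set.Icc (Real.exp (-1)) (Real.exp 1))

/-- `R_L = [L−1,L+1]×[−1,1]×[e⁻¹,e]`. -/
def RLset (L : ℝ) : Set G :=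
  Set.Icc (L - 1) (L + 1) ×ˢ (Set.Icc (-1 : ℝ) 1 ×ˢ Set.Icc (Real.exp (-1)) (Real.exp 1))

/-- `f_L = χ_{R_L} − χ_{R₀}`. -/
def fL (L : ℝ) : G → ℝ := fun x =>
  (RLset L).indicator (fun _ => (1 : ℝ)) x - R0set.indicator (fun _ => (1 : ℝ)) x

/-- The mean of `g` over `R` with respect to `ρ`. -/
def czMean (g : G → ℝ) (R : Set G) : ℝ := (∫ x in R, g x ∂ρG) / (ρG R).toReal

/-- `‖g‖_{BMO} = sup_R ρ(R)⁻¹ ∫_R |g − g_R| dρ` over Calderón–Zygmund sets `R`. -/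
def czBMO (g : G → ℝ) : ℝ≥0∞ :=
  ⨆ (R : Set G) (_ : IsCZ R),
    (ρG R)⁻¹ * ∫⁻ x in R, ENNReal.ofReal |g x - czMean g R| ∂ρG

/-- `‖h‖_{BMO(ℝ)} = sup_Q |Q|⁻¹ ∫_Q |h − h_Q|` over bounded intervals `Q ⊂ ℝ`. -/
def lineBMO (h : ℝ → ℝ) : ℝ≥0∞ :=
  ⨆ (a : ℝ) (b : ℝ) (_ : a < b),
    (ENNReal.ofReal (b - a))⁻¹ *
      ∫⁻ s in Set.Icc a b, ENNReal.ofReal |h s - (∫ u in Set.Icc a b, h u) / (b - a)|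

/-- `2R₀ = [−2,2]×[−2,2]×[e⁻²,e²]`. -/
def twoR0set : Set G :=
  Set.Icc (-2 : ℝ) 2 ×ˢ (Set.Icc (-2 : ℝ) 2 ×ˢ Set.Icc (Real.exp (-2)) (Real.exp 2))

/-- The set `{x₁ > 3, |x₂| < 1, e⁻¹ < a < e}`. -/
def domSpecial : Set G :=
  {x : G | 3 < x.1 ∧ |x.2.1| < 1 ∧ Real.exp (-1) < x.2.2 ∧ x.2.2 < Real.exp 1}

/-- The function equal to `1/(x₁ (log x₁)^{3/2})` on `{x₁ > 3, |x₂| < 1, e⁻¹ < a < e}`,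
to `c₀` on `R₀`, and `0` elsewhere. -/
def fSpecial (c0 : ℝ) : G → ℝ := fun x =>
  domSpecial.indicator (fun y => (y.1 * Real.log y.1 ^ ((3 : ℝ)/2))⁻¹) x
    + R0set.indicator (fun _ => c0) x

/-!
The function `log` lies in `BMO(ℝ)`, so its truncations `min (log⁺ s) n` have `BMO(ℝ)` norms
bounded independently of `n`. Calderón–Zygmund sets are products and `ρ = dx₁ ⊗ a⁻¹ dx₂ da`,
hence the integral of a function `h(x₁)` against an atom is at most the `BMO(ℝ)` norm of `h`.
Summing over an atomic decomposition and letting `n → ∞`, Fatou's lemma gives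
`∫ log⁺ x₁ f dρ < ∞` for every `f ∈ H¹` that is nonnegative on `|x₁| > 1`. But multiplying
`1 / (x₁ (log x₁) ^ (3 / 2))` by `log x₁` lowers the exponent of the logarithm to `1 / 2`, and
the result is not integrable.
-/

section MeanOscillation

theorem lintegral_enorm_sub_average_le {α E : Type*} [MeasurableSpace α] [NormedAddCommGroup E]
    [NormedSpace ℝ E] [CompleteSpace E] {μ : Measure α} [IsFiniteMeasure μ] {f : α → E}
    (hf : Integrable f μ) (c : E) :
    ∫⁻ x, ‖f x - ⨍ y, f y ∂μ‖ₑ ∂μ ≤ 2 * ∫⁻ x, ‖f x - c‖ₑ ∂μ := by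
  have mean_sub : μ univ * ‖c - ⨍ y, f y ∂μ‖ₑ ≤ ∫⁻ x, ‖f x - c‖ₑ ∂μ := by
    have h : μ.real univ • ((⨍ y, f y ∂μ) - c) = ∫ x, (f x - c) ∂μ := by
      rw [smul_sub, measure_smul_average, integral_sub hf (integrable_const c), integral_const]
    calc μ univ * ‖c - ⨍ y, f y ∂μ‖ₑ = ‖∫ x, (f x - c) ∂μ‖ₑ := by
          rw [← h, enorm_smul, Real.enorm_of_nonneg measureReal_nonneg, ofReal_measureReal,
            ← enorm_neg, neg_sub]
      _ ≤ ∫⁻ x, ‖f x - c‖ₑ ∂μ := enorm_integral_le_lintegral_enorm _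
  calc ∫⁻ x, ‖f x - ⨍ y, f y ∂μ‖ₑ ∂μ
      ≤ ∫⁻ x, (‖f x - c‖ₑ + ‖c - ⨍ y, f y ∂μ‖ₑ) ∂μ := by
        gcongr with x
        simpa only [sub_add_sub_cancel] using enorm_add_le (f x - c) (c - ⨍ y, f y ∂μ)
    _ = ∫⁻ x, ‖f x - c‖ₑ ∂μ + μ univ * ‖c - ⨍ y, f y ∂μ‖ₑ := by
        rw [lintegral_add_right _ measurable_const, lintegral_const, mul_comm]
    _ ≤ 2 * ∫⁻ x, ‖f x - c‖ₑ ∂μ := by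
        rw [two_mul]
        gcongr

theorem setIntegral_Icc_div_eq_setAverage (h : ℝ → ℝ) {a b : ℝ} (hab : a ≤ b) :
    (∫ u in Icc a b, h u) / (b - a) = ⨍ u in Icc a b, h u := by
  rw [setAverage_eq, Real.volume_real_Icc_of_le hab, smul_eq_mul, div_eq_inv_mul]

theorem setLIntegral_enorm_sub_setAverage_le_lineBMO (h : ℝ → ℝ) {a b : ℝ} (hab : a < b) :
    ∫⁻ s in Icc a b, ‖h s - ⨍ u in Icc a b, h u‖ₑ ≤ lineBMO h * volume (Icc a b) := by
  have length_ne_zero : ENNReal.ofReal (b - a) ≠ 0 := by simpa using hab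
  have h_le : (ENNReal.ofReal (b - a))⁻¹ * ∫⁻ s in Icc a b, ‖h s - ⨍ u in Icc a b, h u‖ₑ
      ≤ lineBMO h := by
    simp only [Real.enorm_eq_ofReal_abs, ← setIntegral_Icc_div_eq_setAverage h hab.le]
    exact le_iSup_of_le a (le_iSup_of_le b (le_iSup_of_le hab le_rfl))
  rwa [mul_comm, ← div_eq_mul_inv, ENNReal.div_le_iff length_ne_zero ENNReal.ofReal_ne_top,
    ← Real.volume_Icc] at h_le

theorem lineBMO_le_two_mul {h : ℝ → ℝ} (hh : LocallyIntegrable h) {C : ℝ≥0∞}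
    (hC : ∀ a b, a < b → ∃ c, ∫⁻ s in Icc a b, ‖h s - c‖ₑ ≤ C * volume (Icc a b)) :
    lineBMO h ≤ 2 * C := by
  refine iSup_le fun a ↦ iSup_le fun b ↦ iSup_le fun hab ↦ ?_
  obtain ⟨c, hc⟩ := hC a b hab
  have length_ne_zero : ENNReal.ofReal (b - a) ≠ 0 := by simpa using hab
  simp only [← Real.enorm_eq_ofReal_abs, setIntegral_Icc_div_eq_setAverage h hab.le]
  rw [mul_comm, ← div_eq_mul_inv, ENNReal.div_le_iff length_ne_zero ENNReal.ofReal_ne_top,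
    ← Real.volume_Icc, mul_assoc]
  exact (lintegral_enorm_sub_average_le (hh.integrableOn_isCompact isCompact_Icc) c).trans
    (mul_le_mul_right hc 2)

theorem lineBMO_lipschitz_comp_le {K : NNReal} {φ h : ℝ → ℝ} (hφ : LipschitzWith K φ)
    (hφh : LocallyIntegrable (φ ∘ h)) : lineBMO (φ ∘ h) ≤ 2 * (K * lineBMO h) := by
  refine lineBMO_le_two_mul hφh fun a b hab ↦ ⟨φ (⨍ u in Icc a b, h u), ?_⟩
  calc ∫⁻ s in Icc a b, ‖φ (h s) - φ (⨍ u in Icc a b, h u)‖ₑ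
      ≤ ∫⁻ s in Icc a b, K * ‖h s - ⨍ u in Icc a b, h u‖ₑ := by
        gcongr with s
        simpa only [edist_eq_enorm_sub] using hφ (h s) (⨍ u in Icc a b, h u)
    _ = K * ∫⁻ s in Icc a b, ‖h s - ⨍ u in Icc a b, h u‖ₑ :=
        lintegral_const_mul' _ _ ENNReal.coe_ne_top
    _ ≤ K * lineBMO h * volume (Icc a b) := by
        rw [mul_assoc]
        gcongr
        exact setLIntegral_enorm_sub_setAverage_le_lineBMO h hab

end MeanOscillation

section Logarithm

theorem locallyIntegrable_log : LocallyIntegrable log := by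
  refine locallyIntegrable_iff.2 fun K hK ↦ ?_
  obtain ⟨R, hR⟩ := hK.isBounded.subset_closedBall 0
  rw [Real.closedBall_eq_Icc] at hR
  rcases le_or_gt (0 - R) (0 + R) with hle | hlt
  · exact ((intervalIntegrable_iff_integrableOn_Icc_of_le hle).1
      intervalIntegral.intervalIntegrable_log').mono_set hR
  · rw [Icc_eq_empty hlt.not_ge, subset_empty_iff] at hR
    simp [hR]

theorem abs_log_sub_log_of_abs_le {s M : ℝ} (hs : s ≠ 0) (hsM : |s| ≤ M) :
    |log s - log M| = log M - log s := by
  rw [← log_abs s, abs_sub_comm,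
    abs_of_nonneg (sub_nonneg.2 (log_le_log (abs_pos.2 hs) hsM))]

theorem abs_log_sub_log_le_log_two {s M : ℝ} (hs : s ≠ 0) (hsM : |s| ≤ M) (hMs : M ≤ 2 * |s|) :
    |log s - log M| ≤ log 2 := by
  have hs_pos : 0 < |s| := abs_pos.2 hs
  have h : log M ≤ log 2 + log s := by
    rw [← log_abs s, ← log_mul two_ne_zero hs_pos.ne']
    exact log_le_log (hs_pos.trans_le hsM) hMs
  rw [abs_log_sub_log_of_abs_le hs hsM]
  linarith

theorem lintegral_enorm_log_sub_log {M : ℝ} (hM : 0 ≤ M) :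
    ∫⁻ s in Icc (-M) M, ‖log s - log M‖ₑ = ENNReal.ofReal (2 * M) := by
  have hle : -M ≤ M := neg_le_self hM
  have h_int : IntegrableOn (fun s ↦ log s - log M) (Icc (-M) M) :=
    (locallyIntegrable_log.integrableOn_isCompact isCompact_Icc).sub
      (integrableOn_const isCompact_Icc.measure_lt_top.ne)
  have h_abs : ∀ᵐ s ∂volume.restrict (Icc (-M) M), ‖log s - log M‖ = log M - log s := by
    filter_upwards [ae_restrict_of_ae (Measure.ae_ne volume 0),
      ae_restrict_mem measurableSet_Icc] with s hs hsM
    exact abs_log_sub_log_of_abs_le hs (abs_le.2 hsM)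
  rw [← ofReal_integral_norm_eq_lintegral_enorm h_int, integral_congr_ae h_abs,
    integral_Icc_eq_integral_Ioc, ← intervalIntegral.integral_of_le hle,
    intervalIntegral.integral_sub intervalIntegrable_const
      intervalIntegral.intervalIntegrable_log', integral_log,
    intervalIntegral.integral_const, log_neg_eq_log, smul_eq_mul]
  ring_nf

theorem max_abs_le_two_mul_abs {a b s : ℝ} (hs : s ∈ Icc a b)
    (hab : 2 * (b - a) ≤ max |a| |b|) : max |a| |b| ≤ 2 * |s| := by
  have ha : |a| ≤ |s| + (b - a) := by
    linarith [abs_sub_abs_le_abs_sub a s, abs_of_nonpos (sub_nonpos.2 hs.1), hs.2]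
  have hb : |b| ≤ |s| + (b - a) := by
    linarith [abs_sub_abs_le_abs_sub b s, abs_of_nonneg (sub_nonneg.2 hs.2), hs.1]
  linarith [max_le ha hb]

-- Far from the origin `log` varies by at most `log 2` on the interval; otherwise the interval is
-- comparable to `[-M, M]`, where the integral is explicit.
theorem lintegral_enorm_log_sub_log_max_le (a b : ℝ) :
    ∫⁻ s in Icc a b, ‖log s - log (max |a| |b|)‖ₑ ≤ 4 * volume (Icc a b) := by
  set M := max |a| |b|
  have hsM : ∀ s ∈ Icc a b, |s| ≤ M := fun s hs ↦ abs_le_max_abs_abs hs.1 hs.2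
  rcases le_total (2 * (b - a)) M with far | near
  · have h_le : ∀ᵐ s ∂volume.restrict (Icc a b), ‖log s - log M‖ₑ ≤ 4 := by
      filter_upwards [ae_restrict_of_ae (Measure.ae_ne volume 0),
        ae_restrict_mem measurableSet_Icc] with s hs0 hs
      have h := abs_log_sub_log_le_log_two hs0 (hsM s hs) (max_abs_le_two_mul_abs hs far)
      rw [Real.enorm_eq_ofReal_abs, ENNReal.ofReal_le_ofNat]
      exact h.trans (by linarith [log_two_lt_d9])
    simpa using lintegral_mono_ae h_le
  · calc ∫⁻ s in Icc a b, ‖log s - log M‖ₑ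
        ≤ ∫⁻ s in Icc (-M) M, ‖log s - log M‖ₑ :=
          lintegral_mono_set fun s hs ↦ abs_le.1 (hsM s hs)
      _ = ENNReal.ofReal (2 * M) := lintegral_enorm_log_sub_log (le_max_of_le_left (abs_nonneg a))
      _ ≤ ENNReal.ofReal (4 * (b - a)) := ENNReal.ofReal_le_ofReal (by linarith)
      _ = 4 * volume (Icc a b) := by
          rw [Real.volume_Icc, ENNReal.ofReal_mul zero_le_four, ENNReal.ofReal_ofNat]

theorem lineBMO_log_le : lineBMO log ≤ 8 :=
  (lineBMO_le_two_mul locallyIntegrable_log fun a b _ ↦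
    ⟨_, lintegral_enorm_log_sub_log_max_le a b⟩).trans_eq (by norm_num)

theorem lineBMO_min_posLog_le (k : ℝ) : lineBMO (fun s ↦ min (log⁺ s) k) ≤ 16 := by
  have h_loc : LocallyIntegrable fun s ↦ min (log⁺ s) k :=
    (continuous_posLog.min continuous_const).locallyIntegrable
  calc lineBMO (fun s ↦ min (log⁺ s) k) ≤ 2 * ((1 : NNReal) * lineBMO log) :=
        lineBMO_lipschitz_comp_le (φ := fun t ↦ min (max 0 t) k)
          ((LipschitzWith.id.const_max 0).min_const k) h_loc
    _ ≤ 2 * ((1 : NNReal) * 8) := by gcongr; exact lineBMO_log_le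
    _ = 16 := by norm_num

theorem integrableOn_Ioi_inv_mul_log_rpow_iff {c p : ℝ} (hc : 1 < c) :
    IntegrableOn (fun x ↦ (x * log x ^ p)⁻¹) (Ioi c) ↔ 1 < p := by
  have hpos : ∀ x ∈ Ioi c, 0 < x := fun x hx ↦ zero_lt_one.trans (hc.trans hx)
  have h_image : log '' Ioi c = Ioi (log c) := by
    ext t
    refine ⟨?_, fun ht ↦ ⟨exp t, (log_lt_iff_lt_exp (zero_lt_one.trans hc)).1 ht, log_exp t⟩⟩
    rintro ⟨x, hx, rfl⟩
    exact log_lt_log (zero_lt_one.trans hc) hx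
  have h_subst := integrableOn_image_iff_integrableOn_abs_deriv_smul measurableSet_Ioi
    (fun x hx ↦ (hasDerivAt_log (hpos x hx).ne').hasDerivWithinAt)
    (log_injOn_pos.mono hpos) fun t ↦ t ^ (-p)
  rw [h_image, integrableOn_Ioi_rpow_iff (log_pos hc), neg_lt_neg_iff] at h_subst
  rw [h_subst]
  refine integrableOn_congr_fun (fun x hx ↦ ?_) measurableSet_Ioi
  rw [smul_eq_mul, abs_of_pos (inv_pos.2 (hpos x hx)), mul_inv,
    rpow_neg (log_nonneg (hc.trans hx).le)]

end Logarithm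

section HaarMeasure

/-- The measure `a⁻¹ dx₂ da` on the last two coordinates: the factor of `ρG` transverse to `x₁`. -/
def fiberMeasure : Measure (ℝ × ℝ) :=
  volume.withDensity fun z ↦ ENNReal.ofReal (if 0 < z.2 then z.2⁻¹ else 0)

instance : SFinite fiberMeasure := by
  unfold fiberMeasure
  infer_instance

theorem measurable_fiberMeasure_density :
    Measurable fun z : ℝ × ℝ ↦ ENNReal.ofReal (if 0 < z.2 then z.2⁻¹ else 0) :=
  (Measurable.ite (measurableSet_lt measurable_const measurable_snd) measurable_snd.inv
    measurable_const).ennreal_ofReal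

theorem ρG_eq_prod : ρG = (volume : Measure ℝ).prod fiberMeasure :=
  (prod_withDensity_right measurable_fiberMeasure_density).symm

theorem fiberMeasure_lt_top_of_isCompact {K : Set (ℝ × ℝ)} (hK : IsCompact K)
    (hpos : ∀ z ∈ K, 0 < z.2) : fiberMeasure K < ∞ := by
  have h_cont : ContinuousOn (fun z : ℝ × ℝ ↦ z.2⁻¹) K :=
    continuousOn_snd.inv₀ fun z hz ↦ (hpos z hz).ne'
  calc fiberMeasure K = ∫⁻ z in K, ENNReal.ofReal z.2⁻¹ := by
        rw [fiberMeasure, withDensity_apply _ hK.measurableSet]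
        exact setLIntegral_congr_fun hK.measurableSet fun z hz ↦ by simp only [if_pos (hpos z hz)]
    _ < ∞ := (h_cont.integrableOn_compact hK).lintegral_lt_top

theorem fiberMeasure_pos_of_isOpen {U : Set (ℝ × ℝ)} (hU : IsOpen U) {z : ℝ × ℝ} (hz : z ∈ U)
    (hz_pos : 0 < z.2) : 0 < fiberMeasure U := by
  have h_open : IsOpen ({w : ℝ × ℝ | 0 < w.2} ∩ U) :=
    (isOpen_lt continuous_const continuous_snd).inter hU
  refine pos_iff_ne_zero.2 fun h_zero ↦ (h_open.measure_pos volume ⟨z, hz_pos, hz⟩).ne' ?_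
  rw [fiberMeasure, withDensity_apply_eq_zero measurable_fiberMeasure_density] at h_zero
  refine measure_mono_null (inter_subset_inter_left U fun w (hw : 0 < w.2) ↦ ?_) h_zero
  simp [hw]

end HaarMeasure

section Duality

theorem lintegral_prod_comp_fst {α β : Type*} [MeasurableSpace α] [MeasurableSpace β]
    {μ : Measure α} {ν : Measure β} [SFinite ν] {f : α → ℝ≥0∞} (hf : AEMeasurable f μ) :
    ∫⁻ z, f z.1 ∂μ.prod ν = (∫⁻ x, f x ∂μ) * ν univ := by
  simpa using lintegral_prod_mul hf (aemeasurable_const (μ := ν) (b := 1))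

theorem enorm_integral_mul_le_of_integral_eq_zero {α : Type*} [MeasurableSpace α] {μ : Measure α}
    {S : Set α} {h A : α → ℝ} (hh : AEMeasurable h μ) (hA : Integrable A μ)
    (hA_zero : ∫ x, A x ∂μ = 0) (hA_supp : ∀ x ∉ S, A x = 0)
    (hhA : Integrable (fun x ↦ h x * A x) μ) (c : ℝ) :
    ‖∫ x, h x * A x ∂μ‖ₑ ≤ eLpNorm A ⊤ μ * ∫⁻ x in S, ‖h x - c‖ₑ ∂μ := by
  have h_shift : ∫ x, h x * A x ∂μ = ∫ x in S, (h x - c) * A x ∂μ := by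
    rw [setIntegral_eq_integral_of_forall_compl_eq_zero fun x hx ↦ by rw [hA_supp x hx, mul_zero]]
    simp only [sub_mul]
    rw [integral_sub hhA (hA.const_mul c), integral_const_mul, hA_zero, mul_zero, sub_zero]
  have h_sup : ∀ᵐ x ∂μ.restrict S, ‖A x‖ₑ ≤ eLpNorm A ⊤ μ :=
    ae_restrict_of_ae (by simpa only [eLpNorm_exponent_top] using enorm_ae_le_eLpNormEssSup A μ)
  calc ‖∫ x, h x * A x ∂μ‖ₑ = ‖∫ x in S, (h x - c) * A x ∂μ‖ₑ := by rw [h_shift]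
    _ ≤ ∫⁻ x in S, ‖(h x - c) * A x‖ₑ ∂μ := enorm_integral_le_lintegral_enorm _
    _ ≤ ∫⁻ x in S, eLpNorm A ⊤ μ * ‖h x - c‖ₑ ∂μ := by
        refine lintegral_mono_ae (h_sup.mono fun x hx ↦ ?_)
        rw [enorm_mul, mul_comm]
        gcongr
    _ = eLpNorm A ⊤ μ * ∫⁻ x in S, ‖h x - c‖ₑ ∂μ :=
        lintegral_const_mul'' _ (hh.restrict.sub_const c).enorm

theorem IsAtomG.enorm_integral_fst_mul_le {A : G → ℝ} (hA : IsAtomG A) {h : ℝ → ℝ}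
    (hh : Measurable h) (hhA : Integrable (fun x ↦ h x.1 * A x) ρG) :
    ‖∫ x, h x.1 * A x ∂ρG‖ₑ ≤ lineBMO h := by
  obtain ⟨hA_int, R, ⟨c, L, r, -, hL, -, hR, -, -⟩, hA_supp, hA_sup, hA_zero⟩ := hA
  set I := Icc (c.1 - L / 2) (c.1 + L / 2)
  set S := Icc (c.2.1 - L / 2) (c.2.1 + L / 2) ×ˢ Icc (c.2.2 * exp (-r)) (c.2.2 * exp r)
  have ρR : ρG R = volume I * fiberMeasure S := by rw [hR, ρG_eq_prod, Measure.prod_prod]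
  set m := ⨍ u in I, h u
  calc ‖∫ x, h x.1 * A x ∂ρG‖ₑ
      ≤ eLpNorm A ⊤ ρG * ∫⁻ x in R, ‖h x.1 - m‖ₑ ∂ρG :=
        enorm_integral_mul_le_of_integral_eq_zero (hh.comp measurable_fst).aemeasurable
          hA_int hA_zero hA_supp hhA m
    _ = eLpNorm A ⊤ ρG * ((∫⁻ s in I, ‖h s - m‖ₑ) * fiberMeasure S) := by
        rw [hR, ρG_eq_prod, ← Measure.prod_restrict,
          lintegral_prod_comp_fst (f := fun s ↦ ‖h s - m‖ₑ) (hh.sub_const m).enorm.aemeasurable,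
          Measure.restrict_apply_univ]
    _ ≤ (ρG R)⁻¹ * (lineBMO h * volume I * fiberMeasure S) := by
        gcongr
        exact setLIntegral_enorm_sub_setAverage_le_lineBMO h (by linarith)
    _ = lineBMO h * ((ρG R)⁻¹ * ρG R) := by rw [ρR]; ring
    _ ≤ lineBMO h := mul_le_of_le_one_right' (ENNReal.inv_mul_le_one _)

theorem tendsto_integral_mul_of_tendsto_eLpNorm_one {α : Type*} [MeasurableSpace α]
    {μ : Measure α} {h f : α → ℝ} {F : ℕ → α → ℝ} (hh : MemLp h ⊤ μ) (hf : Integrable f μ)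
    (hF : ∀ n, Integrable (F n) μ)
    (hF_tendsto : Tendsto (fun n ↦ eLpNorm (fun x ↦ f x - F n x) 1 μ) atTop (nhds 0)) :
    Tendsto (fun n ↦ ∫ x, h x * F n x ∂μ) atTop (nhds (∫ x, h x * f x ∂μ)) := by
  refine tendsto_integral_of_L1' _ (hf.mul_of_top_right hh).aestronglyMeasurable
    (.of_forall fun n ↦ (hF n).mul_of_top_right hh) ?_
  have h_le : ∀ n, eLpNorm ((fun x ↦ h x * F n x) - fun x ↦ h x * f x) 1 μ
      ≤ eLpNorm h ⊤ μ * eLpNorm (fun x ↦ f x - F n x) 1 μ := fun n ↦ by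
    rw [eLpNorm_sub_comm]
    simpa only [one_mul, ← mul_sub, ENNReal.coe_one, Pi.sub_def] using
      eLpNorm_le_eLpNorm_top_mul_eLpNorm 1 h (hf.sub (hF n)).1 (· * ·) 1
        (.of_forall fun x ↦ by simp)
  refine tendsto_of_tendsto_of_tendsto_of_le_of_le tendsto_const_nhds ?_ (fun _ ↦ zero_le) h_le
  simpa using ENNReal.Tendsto.const_mul hF_tendsto (.inr hh.eLpNorm_ne_top)

theorem memLp_top_comp_fst {α β : Type*} [MeasurableSpace α] [MeasurableSpace β]
    {μ : Measure (α × β)} {h : α → ℝ} (hh : Measurable h) {B : ℝ} (hB : ∀ s, |h s| ≤ B) :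
    MemLp (fun x ↦ h x.1) ⊤ μ :=
  memLp_top_of_bound (hh.comp measurable_fst).aestronglyMeasurable B (.of_forall fun x ↦ hB x.1)

theorem MemH1.exists_enorm_integral_fst_mul_le {f : G → ℝ} (hf : MemH1 f) :
    ∃ C ≠ ∞, ∀ h : ℝ → ℝ, Measurable h → (∃ B, ∀ s, |h s| ≤ B) →
      ‖∫ x, h x.1 * f x ∂ρG‖ₑ ≤ C * lineBMO h := by
  obtain ⟨hf_int, lam, A, hA, h_sum, h_tendsto⟩ := hf
  refine ⟨∑' j, ‖lam j‖ₑ, ?_, fun h hh ⟨B, hB⟩ ↦ ?_⟩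
  · exact tsum_enorm_ne_top_iff_summable_norm.2 h_sum
  have hh_top : MemLp (fun x : G ↦ h x.1) ⊤ ρG := memLp_top_comp_fst hh hB
  have hhA : ∀ j, Integrable (fun x ↦ h x.1 * A j x) ρG := fun j ↦
    (hA j).1.mul_of_top_right hh_top
  refine le_of_tendsto (tendsto_integral_mul_of_tendsto_eLpNorm_one hh_top hf_int
    (fun n ↦ integrable_finsetSum _ fun j _ ↦ (hA j).1.const_mul (lam j)) h_tendsto).enorm
    (.of_forall fun n ↦ ?_)
  calc ‖∫ x, h x.1 * ∑ j ∈ Finset.range n, lam j * A j x ∂ρG‖ₑ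
      = ‖∑ j ∈ Finset.range n, lam j * ∫ x, h x.1 * A j x ∂ρG‖ₑ := by
        simp only [Finset.mul_sum, mul_left_comm (h _)]
        rw [integral_finsetSum _ fun j _ ↦ (hhA j).const_mul (lam j)]
        simp only [integral_const_mul]
    _ ≤ ∑ j ∈ Finset.range n, ‖lam j * ∫ x, h x.1 * A j x ∂ρG‖ₑ := enorm_sum_le _ _
    _ ≤ ∑ j ∈ Finset.range n, ‖lam j‖ₑ * lineBMO h := by
        gcongr with j
        rw [enorm_mul]
        gcongr
        exact (hA j).enorm_integral_fst_mul_le hh (hhA j)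
    _ ≤ (∑' j, ‖lam j‖ₑ) * lineBMO h := by
        rw [← Finset.sum_mul]
        gcongr
        exact ENNReal.sum_le_tsum _

theorem integrable_of_tendsto_of_enorm_integral_le {α : Type*} [MeasurableSpace α]
    {μ : Measure α} {F : ℕ → α → ℝ} {f : α → ℝ} (hF : ∀ n, Integrable (F n) μ)
    (hF_nonneg : ∀ n, 0 ≤ᵐ[μ] F n) {C : ℝ≥0∞} (hC : C ≠ ∞) (hFC : ∀ n, ‖∫ x, F n x ∂μ‖ₑ ≤ C)
    (h_tendsto : ∀ᵐ x ∂μ, Tendsto (fun n ↦ F n x) atTop (nhds (f x))) : Integrable f μ := by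
  have h_norm : ∀ n, eLpNorm (F n) 1 μ ≤ C := fun n ↦ by
    have h_eq : ∫ x, ‖F n x‖ ∂μ = ∫ x, F n x ∂μ :=
      integral_congr_ae <| (hF_nonneg n).mono fun x hx ↦ Real.norm_of_nonneg hx
    rw [eLpNorm_one_eq_lintegral_enorm, ← ofReal_integral_norm_eq_lintegral_enorm (hF n), h_eq,
      ← Real.enorm_of_nonneg (integral_nonneg_of_ae (hF_nonneg n))]
    exact hFC n
  refine memLp_one_iff_integrable.1
    ⟨aestronglyMeasurable_of_tendsto_ae _ (fun n ↦ (hF n).1) h_tendsto, ?_⟩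
  calc eLpNorm f 1 μ ≤ liminf (fun n ↦ eLpNorm (F n) 1 μ) atTop :=
        Lp.eLpNorm_lim_le_liminf_eLpNorm (fun n ↦ (hF n).1) f h_tendsto
    _ ≤ C := liminf_le_of_le (by isBoundedDefault) fun c hc ↦
        have ⟨n, hn⟩ := hc.exists
        hn.trans (h_norm n)
    _ < ∞ := hC.lt_top

theorem MemH1.integrable_posLog_fst_mul {f : G → ℝ} (hf : MemH1 f)
    (hf_nonneg : ∀ x, 1 < |x.1| → 0 ≤ f x) : Integrable (fun x ↦ log⁺ x.1 * f x) ρG := by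
  obtain ⟨C, hC, h_pair⟩ := hf.exists_enorm_integral_fst_mul_le
  have h_meas : ∀ n : ℕ, Measurable fun s ↦ min (log⁺ s) n := fun n ↦
    (continuous_posLog.min continuous_const).measurable
  have h_bound : ∀ (n : ℕ) (s : ℝ), |min (log⁺ s) n| ≤ n := fun n s ↦ by
    rw [abs_of_nonneg (le_min posLog_nonneg n.cast_nonneg)]
    exact min_le_right _ _
  have h_top : ∀ n : ℕ, MemLp (fun x : G ↦ min (log⁺ x.1) n) ⊤ ρG := fun n ↦
    memLp_top_comp_fst (h_meas n) (h_bound n)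
  have h_int : ∀ n : ℕ, Integrable (fun x : G ↦ min (log⁺ x.1) n * f x) ρG := fun n ↦
    hf.1.mul_of_top_right (h_top n)
  have h_nonneg : ∀ (n : ℕ) (x : G), 0 ≤ min (log⁺ x.1) n * f x := fun n x ↦ by
    rcases le_or_gt |x.1| 1 with hx | hx
    · simp [(posLog_eq_zero_iff x.1).2 hx]
    · exact mul_nonneg (le_min posLog_nonneg n.cast_nonneg) (hf_nonneg x hx)
  have h_unif : ∀ n : ℕ, ‖∫ x, min (log⁺ x.1) n * f x ∂ρG‖ₑ ≤ C * 16 := fun n ↦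
    (h_pair _ (h_meas n) ⟨n, h_bound n⟩).trans (by gcongr; exact lineBMO_min_posLog_le n)
  have h_tendsto : ∀ x : G,
      Tendsto (fun n : ℕ ↦ min (log⁺ x.1) n * f x) atTop (nhds (log⁺ x.1 * f x)) := fun x ↦
    Tendsto.mul_const _ <| tendsto_atTop_of_eventually_const (i₀ := ⌈log⁺ x.1⌉₊) fun _ hn ↦
      min_eq_left (Nat.ceil_le.1 hn)
  exact integrable_of_tendsto_of_enorm_integral_le h_int (fun n ↦ .of_forall (h_nonneg n))
    (ENNReal.mul_ne_top hC ENNReal.ofNat_ne_top) h_unif (.of_forall h_tendsto)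

end Duality

section LogTail

/-- The function `1/(x₁ (log x₁)^p)` on the half-strip `domSpecial`, extended by zero. -/
def logTail (p : ℝ) : G → ℝ := domSpecial.indicator fun x ↦ (x.1 * log x.1 ^ p)⁻¹

theorem posLog_fst_mul_logTail (p : ℝ) (x : G) : log⁺ x.1 * logTail p x = logTail (p - 1) x := by
  by_cases hx : x ∈ domSpecial
  · have h3 : 3 < x.1 := hx.1
    have h_log : 0 < log x.1 := log_pos (by linarith)
    rw [logTail, logTail, indicator_of_mem hx, indicator_of_mem hx,
      posLog_eq_log ((by linarith : 1 ≤ x.1).trans (le_abs_self _)), rpow_sub_one h_log.ne']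
    field_simp
  · simp [logTail, hx]

theorem logTail_nonneg (p : ℝ) (x : G) : 0 ≤ logTail p x := by
  refine indicator_nonneg (fun y hy ↦ ?_) x
  have h3 : 3 < y.1 := hy.1
  have h_log : 0 < log y.1 := log_pos (by linarith)
  positivity

theorem domSpecial_eq_prod :
    domSpecial = Ioi 3 ×ˢ (Ioo (-1) 1 ×ˢ Ioo (exp (-1)) (exp 1)) := by
  ext x
  simp [domSpecial, abs_lt]

theorem fiberMeasure_Icc_prod_Icc_lt_top :
    fiberMeasure (Icc (-1) 1 ×ˢ Icc (exp (-1)) (exp 1)) < ∞ :=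
  fiberMeasure_lt_top_of_isCompact (isCompact_Icc.prod isCompact_Icc)
    fun _ hz ↦ (exp_pos (-1)).trans_le hz.2.1

theorem integrable_logTail_iff {p : ℝ} : Integrable (logTail p) ρG ↔ 1 < p := by
  set S : Set (ℝ × ℝ) := Ioo (-1) 1 ×ˢ Ioo (exp (-1)) (exp 1)
  have hS_fin : fiberMeasure S < ∞ :=
    (measure_mono (Set.prod_mono Ioo_subset_Icc_self Ioo_subset_Icc_self)).trans_lt
      fiberMeasure_Icc_prod_Icc_lt_top
  have hS_pos : 0 < fiberMeasure S :=
    fiberMeasure_pos_of_isOpen (isOpen_Ioo.prod isOpen_Ioo) (z := (0, 1)) (by simp [S]) one_pos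
  have h_meas : MeasurableSet (Ioi (3 : ℝ) ×ˢ S) :=
    measurableSet_Ioi.prod (measurableSet_Ioo.prod measurableSet_Ioo)
  have : IsFiniteMeasure (fiberMeasure.restrict S) := ⟨by simpa using hS_fin⟩
  rw [logTail, domSpecial_eq_prod, integrable_indicator_iff h_meas, IntegrableOn, ρG_eq_prod,
    ← Measure.prod_restrict, ← integrableOn_Ioi_inv_mul_log_rpow_iff (c := 3) (by norm_num)]
  exact Integrable.comp_fst_iff (f := fun s ↦ (s * log s ^ p)⁻¹)
    (Measure.restrict_eq_zero.not.2 hS_pos.ne')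

theorem integrable_indicator_R0set (c : ℝ) : Integrable (R0set.indicator fun _ ↦ c) ρG := by
  refine (integrable_indicator_iff (measurableSet_Icc.prod
    (measurableSet_Icc.prod measurableSet_Icc))).2 (integrableOn_const ?_)
  rw [ρG_eq_prod, Measure.prod_prod]
  exact ENNReal.mul_ne_top isCompact_Icc.measure_lt_top.ne fiberMeasure_Icc_prod_Icc_lt_top.ne

end LogTail

theorem fSpecial_L1_not_H1_general {p : ℝ} (hp : 1 < p) (hp' : p ≤ 2) {b : G → ℝ}
    (hb : Integrable b ρG) (hb_supp : ∀ x, 1 < |x.1| → b x = 0) :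
    Integrable (fun x ↦ logTail p x + b x) ρG ∧ ¬ MemH1 (fun x ↦ logTail p x + b x) := by
  refine ⟨(integrable_logTail_iff.2 hp).add hb, fun hf ↦ ?_⟩
  have h_moment : Integrable (fun x ↦ log⁺ x.1 * (logTail p x + b x)) ρG :=
    hf.integrable_posLog_fst_mul fun x hx ↦ by
      simpa only [hb_supp x hx, add_zero] using logTail_nonneg p x
  have h_eq : (fun x ↦ log⁺ x.1 * (logTail p x + b x)) = logTail (p - 1) := by
    ext x
    rw [mul_add, posLog_fst_mul_logTail, add_eq_left, mul_eq_zero, posLog_eq_zero_iff,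
      ← not_lt, ← imp_iff_not_or]
    exact hb_supp x
  rw [h_eq, integrable_logTail_iff] at h_moment
  linarith

theorem fSpecial_L1_not_H1 :
    ∀ c0 : ℝ, (∫ x, fSpecial c0 x ∂ρG) = 0 →
      Integrable (fSpecial c0) ρG ∧ ¬ MemH1 (fSpecial c0) :=
  fun c0 _ ↦ fSpecial_L1_not_H1_general (p := 3 / 2) (by norm_num) (by norm_num)
    (integrable_indicator_R0set c0) fun _ hx ↦ indicator_of_notMem
      (fun h ↦ hx.not_ge (abs_le.2 h.1)) _
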